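/- For every n ≥ 2, the number of equivalence classes of linear identities of length 2n under mutual implication (I ≈ J iff I implies J and J implies I) equals 1 + binom(Cₙ, 2)·n! + Cₙ·Σ_{m≥2} s_{n,m}/φ(m), where s_{n,m} is the number of elements of order m in the symmetric group Sₙ, φ is Euler's totient function, and the sum Σ_{m≥2} s_{n,m}/φ(m) equals the number of nontrivial cyclic subgroups of Sₙ. -/

import Mathlib

/-!
Over the free magma an identity `⟨s, t, f⟩` with `n` leaves on each side can only be applied to a
term with `n` leaves at the root, with generators substituted for the variables. Hence on such terms
it identifies just `s(x)` with `t(x ∘ f)`, so that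

* if `s ≠ t`, its only nontrivial consequences of the same length are itself and `⟨t, s, f⁻¹⟩`;
* if `s = t`, its consequences are the trivial identities and the `⟨s, s, g⟩` with `g` in the
  cyclic group generated by `f`

(`eq_of_implies`). This is made precise by the nilpotent magma `Nilp n c`, in which terms with fewer
than `n` leaves multiply freely, terms with `n` leaves are collapsed to the value of a
predicate `c`, and everything longer is `zero`. It satisfies `⟨s, t, f⟩` as soon as `c` is invariant
under the identity (`Nilp.satisfies`), and satisfying it forces `c` to agree on the two sides
(`Nilp.of_satisfies`); `c` is then taken to be the class of the left side of the other identity.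

The equivalence classes are therefore: the trivial class, one class for each pair `s < t` (in
an arbitrary enumeration of the bracketings) and each permutation, and one class for each bracketing
and each nontrivial cyclic subgroup of `Sₙ` (`implies_of_classOf_eq`,
`classOf_eq_of_implies`, `classOf_surjective`). Cyclic subgroups are counted by their generators,
`φ(m)` of them in order `m`.
-/

/-- Bracketings: full binary trees in which every internal node has two children. -/
inductive Brack : Type
  | leaf : Brack
  | node : Brack → Brack → Brack

/-- Number of leaves of a bracketing. -/
def Brack.leaves : Brack → ℕ
  | .leaf => 1
  | .node l r => l.leaves + r.leaves

/-- The `s`-product in a magma `G`: evaluate the bracketing `s`, labelling its leaves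
from left to right by `a k, a (k+1), …`. -/
def Brack.eval {G : Type*} [Mul G] : Brack → (ℕ → G) → ℕ → G
  | .leaf, a, k => a k
  | .node l r, a, k => l.eval a k * r.eval a (k + l.leaves)

/-- Extend a permutation of `{0, …, n−1}` to `ℕ` (identity elsewhere). -/
def permNat {n : ℕ} (f : Equiv.Perm (Fin n)) (i : ℕ) : ℕ :=
  if h : i < n then (f ⟨i, h⟩ : ℕ) else i

/-- A magma `G` satisfies the linear identity `⟨s, t, f⟩` if for all `a₁, …, aₙ ∈ G`
the `s`-product of `(a₁, …, aₙ)` equals the `t`-product of `(a_{f(1)}, …, a_{f(n)})`. -/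
def Satisfies (G : Type*) [Mul G] {n : ℕ} (s t : Brack) (f : Equiv.Perm (Fin n)) : Prop :=
  ∀ a : ℕ → G, s.eval a 0 = t.eval (fun i => a (permNat f i)) 0

/-- A magma `G` is `m`AC-nice if any two products of the same `m` elements coincide:
for every `a`, all bracketings `s, t` with `m` leaves and all permutations `f, g`,
the `s`-product of `(a_{f(1)}, …, a_{f(m)})` equals the `t`-product of
`(a_{g(1)}, …, a_{g(m)})`. -/
def ACnice (G : Type*) [Mul G] (m : ℕ) : Prop :=
  ∀ (a : ℕ → G) (s t : Brack), s.leaves = m → t.leaves = m →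
    ∀ f g : Equiv.Perm (Fin m),
      s.eval (fun i => a (permNat f i)) 0 = t.eval (fun i => a (permNat g i)) 0

/-- Linear identities of length `2n`. -/
abbrev LinTriple (n : ℕ) :=
  {x : Brack × Brack × Equiv.Perm (Fin n) // x.1.leaves = n ∧ x.2.1.leaves = n}

/-- `I` implies `J` if every magma satisfying `I` satisfies `J`. -/
def Implies.{w} {n : ℕ} (I J : LinTriple n) : Prop :=
  ∀ (G : Type w) [Mul G],
    Satisfies G I.1.1 I.1.2.1 I.1.2.2 → Satisfies G J.1.1 J.1.2.1 J.1.2.2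

/-! ### Bracketings and the Catalan numbers -/

theorem Brack.leaves_pos : ∀ b : Brack, 0 < b.leaves
  | .leaf => Nat.one_pos
  | .node l _ => Nat.add_pos_left l.leaves_pos _

/-- A bracketing as a binary tree of internal nodes, the leaves becoming empty trees. -/
def Brack.toTree : Brack → BinaryTree Unit
  | .leaf => .nil
  | .node l r => .node () l.toTree r.toTree

/-- The inverse of `Brack.toTree`. -/
def Brack.ofTree : BinaryTree Unit → Brack
  | .nil => .leaf
  | .node _ l r => .node (ofTree l) (ofTree r)

theorem Brack.ofTree_toTree : ∀ b : Brack, ofTree b.toTree = b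
  | .leaf => rfl
  | .node l r => by simp [toTree, ofTree, ofTree_toTree l, ofTree_toTree r]

theorem Brack.toTree_ofTree : ∀ b : BinaryTree Unit, (ofTree b).toTree = b
  | .nil => rfl
  | .node _ l r => by simp [toTree, ofTree, toTree_ofTree l, toTree_ofTree r]

theorem Brack.leaves_eq : ∀ b : Brack, b.leaves = b.toTree.numNodes + 1
  | .leaf => rfl
  | .node l r => by
    simp only [leaves, toTree, BinaryTree.numNodes, leaves_eq l, leaves_eq r]; omega

/-- Bracketings with `n` leaves. -/
abbrev BrackN (n : ℕ) := {b : Brack // b.leaves = n}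

/-- Bracketings with `n` leaves are the binary trees with `n - 1` internal nodes. -/
def brackEquiv (n : ℕ) (hn : 1 ≤ n) : BrackN n ≃ BinaryTree.treesOfNumNodesEq (n - 1) where
  toFun b := ⟨b.1.toTree, by
    have h1 := b.1.leaves_eq
    have h2 := b.2
    rw [BinaryTree.mem_treesOfNumNodesEq]; omega⟩
  invFun t := ⟨Brack.ofTree t.1, by
    have h1 := t.2
    rw [BinaryTree.mem_treesOfNumNodesEq] at h1
    rw [Brack.leaves_eq, Brack.toTree_ofTree]; omega⟩
  left_inv b := Subtype.ext (Brack.ofTree_toTree _)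
  right_inv b := Subtype.ext (Brack.toTree_ofTree _)

theorem finite_brackN (n : ℕ) (hn : 1 ≤ n) : Finite (BrackN n) :=
  Finite.of_equiv _ (brackEquiv n hn).symm

theorem card_brackN (n : ℕ) (hn : 1 ≤ n) : Nat.card (BrackN n) = catalan (n - 1) := by
  rw [Nat.card_congr (brackEquiv n hn), Nat.card_eq_fintype_card, Fintype.card_coe,
    BinaryTree.treesOfNumNodesEq_card_eq_catalan]

/-! ### Consequences that hold in every magma -/

theorem permNat_lt {n : ℕ} (f : Equiv.Perm (Fin n)) {i : ℕ} (h : i < n) : permNat f i < n := by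
  simp [permNat, h]

theorem permNat_mul {n : ℕ} (f g : Equiv.Perm (Fin n)) (i : ℕ) :
    permNat (f * g) i = permNat f (permNat g i) := by
  by_cases h : i < n <;> simp [permNat, h]

theorem permNat_one {n : ℕ} (i : ℕ) : permNat (1 : Equiv.Perm (Fin n)) i = i := by
  by_cases h : i < n <;> simp [permNat, h]

section Sat
variable {G : Type*} [Mul G] {n : ℕ}

theorem Satisfies.refl (s : Brack) : Satisfies G s s (1 : Equiv.Perm (Fin n)) := by
  intro a; simp [permNat_one]

theorem Satisfies.trans {s t u : Brack} {f g : Equiv.Perm (Fin n)}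
    (h1 : Satisfies G s t f) (h2 : Satisfies G t u g) : Satisfies G s u (f * g) := by
  intro a
  rw [h1 a, h2]
  simp [permNat_mul]

theorem Satisfies.symm {s t : Brack} {f : Equiv.Perm (Fin n)}
    (h1 : Satisfies G s t f) : Satisfies G t s f⁻¹ := by
  intro a
  rw [h1]
  simp [← permNat_mul, permNat_one]

theorem Satisfies.zpowers {s : Brack} {f g : Equiv.Perm (Fin n)}
    (h1 : Satisfies G s s f) (hg : g ∈ Subgroup.zpowers f) : Satisfies G s s g := by
  let S : Subgroup (Equiv.Perm (Fin n)) :=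
    { carrier := {g | Satisfies G s s g}
      mul_mem' := fun h h' => Satisfies.trans h h'
      one_mem' := Satisfies.refl s
      inv_mem' := fun h => Satisfies.symm h }
  exact (Subgroup.zpowers_le (H := S)).2 h1 hg

end Sat

/-! ### The separating nilpotent magmas -/

/-- Carrier of a nilpotent magma: `tm b x` is the term with bracketing `b` whose leaves carry the
letters `x 0, x 1, …` (the values of `x` beyond the leaves of `b` are irrelevant), `val` holds the
value of `c` at a term with `n` leaves, and `zero` absorbs everything longer. The predicate `c`
enters only through the multiplication. -/
inductive Nilp.{w} (n : ℕ) (c : Brack → (Fin n → Fin n) → Prop) : Type w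
  | zero : Nilp n c
  | val (p : Prop) : Nilp n c
  | tm (b : Brack) (x : ℕ → Fin n) : Nilp n c

namespace Nilp
universe w
variable {n : ℕ} {c : Brack → (Fin n → Fin n) → Prop}

open Classical in
/-- The element of the nilpotent magma represented by a term. -/
noncomputable def box (b : Brack) (x : ℕ → Fin n) : Nilp.{w} n c :=
  if b.leaves < n then tm b x
  else if b.leaves = n then val (c b (fun i => x i)) else zero

/-- Concatenation of a word of length `m` with another word. -/
def join (m : ℕ) (x y : ℕ → Fin n) (i : ℕ) : Fin n :=
  if i < m then x i else y (i - m)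

noncomputable instance : Mul (Nilp.{w} n c) where
  mul
    | tm b x, tm b' x' => box (.node b b') (join b.leaves x x')
    | _, _ => zero

theorem tm_mul_tm (b b' : Brack) (x x' : ℕ → Fin n) :
    (tm b x * tm b' x' : Nilp.{w} n c) = box (.node b b') (join b.leaves x x') := rfl

/-- A product of at most `n` single letters is the term it spells. -/
theorem eval_tm (hn : 2 ≤ n) (a : ℕ → Nilp.{w} n c) (x : ℕ → Fin n) : ∀ (s : Brack) (k : ℕ),
    s.leaves ≤ n → (∀ i < s.leaves, ∃ y, a (k + i) = tm .leaf y ∧ y 0 = x (k + i)) →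
    ∃ y, s.eval a k = box s y ∧ ∀ i < s.leaves, y i = x (k + i)
  | .leaf, k, _, h => by
    obtain ⟨y, h1, h2⟩ := h 0 (by simp [Brack.leaves])
    refine ⟨y, ?_, ?_⟩
    · have : 1 < n := hn
      simpa [Brack.eval, box, Brack.leaves, this] using h1
    · intro i hi
      obtain rfl : i = 0 := by simpa [Brack.leaves] using hi
      exact h2
  | .node l r, k, hs, h => by
    have hl := l.leaves_pos
    have hr := r.leaves_pos
    simp only [Brack.leaves] at hs h
    obtain ⟨y, h1, h2⟩ := eval_tm hn a x l k (by omega) (fun i hi => h i (by omega))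
    obtain ⟨z, h3, h4⟩ := eval_tm hn a x r (k + l.leaves) (by omega) (fun i hi => by
      have := h (l.leaves + i) (by omega)
      rwa [← add_assoc] at this)
    refine ⟨join l.leaves y z, ?_, ?_⟩
    · rw [Brack.eval, h1, h3, ← tm_mul_tm]
      have e1 : l.leaves < n := by omega
      have e2 : r.leaves < n := by omega
      simp only [box, e1, e2, if_true]
    · intro i hi
      simp only [Brack.leaves] at hi
      unfold join
      split_ifs with hlt
      · exact h2 i hlt
      · rw [h4 _ (by omega)]; congr 1; omega

/-- The number of leaves of an element, `zero` counting as longer than `n`. -/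
def wt : Nilp.{w} n c → ℕ
  | zero => n + 1
  | val _ => n
  | tm b _ => b.leaves

theorem one_le_wt (hn : 2 ≤ n) : ∀ x : Nilp.{w} n c, 1 ≤ x.wt
  | zero => by simp [wt]
  | val _ => by simp [wt]; omega
  | tm b _ => b.leaves_pos

theorem two_le_wt (hn : 2 ≤ n) : ∀ x : Nilp.{w} n c, (¬ ∃ y, x = tm .leaf y) → 2 ≤ x.wt
  | zero, _ => by simp [wt]; omega
  | val _, _ => by simp [wt]; omega
  | tm .leaf y, h => (h ⟨y, rfl⟩).elim
  | tm (.node l r) _, _ => by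
    have hl := l.leaves_pos
    have hr := r.leaves_pos
    simp only [wt, Brack.leaves]; omega

theorem mul_eq_zero (x y : Nilp.{w} n c) (h : n < x.wt + y.wt) : x * y = zero := by
  rcases x with _ | _ | ⟨b, x⟩ <;> rcases y with _ | _ | ⟨b', y⟩ <;> try rfl
  have h' : n < (Brack.node b b').leaves := h
  rw [tm_mul_tm, box, if_neg (by omega), if_neg (by omega)]

theorem wt_mul (x y : Nilp.{w} n c) : min (n + 1) (x.wt + y.wt) ≤ (x * y).wt := by
  by_cases h : n < x.wt + y.wt
  · rw [mul_eq_zero x y h]; simp [wt]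
  · rcases x with _ | _ | ⟨b, x⟩ <;> rcases y with _ | _ | ⟨b', y⟩ <;>
      try exact min_le_left _ _
    have e : (Brack.node b b').leaves = b.leaves + b'.leaves := rfl
    rw [tm_mul_tm, box]
    split_ifs <;> simp only [wt] at h ⊢ <;> omega

/-- A product weighs at least as much as it has factors, and more if some factor is not a
single letter. -/
theorem wt_eval (hn : 2 ≤ n) (a : ℕ → Nilp.{w} n c) : ∀ (s : Brack) (k : ℕ), s.leaves ≤ n →
    s.leaves ≤ (s.eval a k).wt ∧
    ((∃ i < s.leaves, ¬ ∃ y, a (k + i) = tm .leaf y) → s.leaves < (s.eval a k).wt)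
  | .leaf, k, _ => by
    refine ⟨one_le_wt hn _, ?_⟩
    rintro ⟨i, hi, h⟩
    obtain rfl : i = 0 := by simpa [Brack.leaves] using hi
    exact two_le_wt hn _ h
  | .node l r, k, hs => by
    simp only [Brack.leaves] at hs
    have hl := l.leaves_pos
    have hr := r.leaves_pos
    obtain ⟨h1, h2⟩ := wt_eval hn a l k (by omega)
    obtain ⟨h3, h4⟩ := wt_eval hn a r (k + l.leaves) (by omega)
    have h5 := wt_mul (l.eval a k) (r.eval a (k + l.leaves))
    simp only [Brack.leaves, Brack.eval]
    refine ⟨by omega, ?_⟩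
    rintro ⟨i, hi, h⟩
    by_cases hil : i < l.leaves
    · have := h2 ⟨i, hil, h⟩
      omega
    · have := h4 ⟨i - l.leaves, by omega, by
        rwa [show k + l.leaves + (i - l.leaves) = k + i by omega]⟩
      omega

/-- Only products of single letters survive in length `n`. -/
theorem eval_eq_zero (hn : 2 ≤ n) (a : ℕ → Nilp.{w} n c) (s : Brack) (hs : s.leaves = n)
    (h : ∃ i < n, ¬ ∃ y, a i = tm .leaf y) : s.eval a 0 = zero := by
  rcases s with _ | ⟨l, r⟩
  · simp [Brack.leaves] at hs; omega
  · obtain ⟨i, hi, h⟩ := h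
    simp only [Brack.leaves] at hs
    have hl := l.leaves_pos
    have hr := r.leaves_pos
    obtain ⟨h1, h2⟩ := wt_eval hn a l 0 (by omega)
    obtain ⟨h3, h4⟩ := wt_eval hn a r (0 + l.leaves) (by omega)
    apply mul_eq_zero
    by_cases hil : i < l.leaves
    · have := h2 ⟨i, hil, by simpa using h⟩
      omega
    · have := h4 ⟨i - l.leaves, by omega, by
        rwa [show 0 + l.leaves + (i - l.leaves) = i by omega]⟩
      omega

theorem eval_eq_val (hn : 2 ≤ n) (a : ℕ → Nilp.{w} n c) (x : ℕ → Fin n) (s : Brack)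
    (hs : s.leaves = n) (h : ∀ i < n, ∃ y, a i = tm .leaf y ∧ y 0 = x i) :
    s.eval a 0 = val (c s (fun i => x i)) := by
  obtain ⟨y, h1, h2⟩ := eval_tm hn a x s 0 hs.le (by simpa [hs] using h)
  rw [h1, box, if_neg (by omega), if_pos hs]
  congr 2
  funext i
  simpa using h2 i (by omega)

/-- If `c` is invariant under an identity, the nilpotent magma satisfies it. -/
theorem satisfies (hn : 2 ≤ n) {s t : Brack} (hs : s.leaves = n) (ht : t.leaves = n)
    (f : Equiv.Perm (Fin n)) (h : ∀ x : Fin n → Fin n, c s x ↔ c t (x ∘ f)) :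
    Satisfies (Nilp.{w} n c) s t f := by
  intro a
  have : Nonempty (Fin n) := ⟨⟨0, by omega⟩⟩
  by_cases ha : ∀ i < n, ∃ y, a i = tm .leaf y
  · choose! y hy using ha
    rw [eval_eq_val hn a (fun i => y i 0) s hs (fun i hi => ⟨_, hy i hi, rfl⟩),
      eval_eq_val hn _ (fun i => y (permNat f i) 0) t ht
        (fun i hi => ⟨_, hy _ (permNat_lt f hi), rfl⟩)]
    congr 1
    rw [h]
    simp [Function.comp_def, permNat]
  · push Not at ha
    obtain ⟨i, hi, ha⟩ := ha
    rw [eval_eq_zero hn a s hs ⟨i, hi, by simpa using ha⟩,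
      eval_eq_zero hn _ t ht ⟨permNat f⁻¹ i, permNat_lt _ hi, by
        simpa [← permNat_mul, permNat_one] using ha⟩]

/-- An identity satisfied by the nilpotent magma, evaluated at `n` distinct letters. -/
theorem of_satisfies (hn : 2 ≤ n) {s t : Brack} (hs : s.leaves = n) (ht : t.leaves = n)
    (f : Equiv.Perm (Fin n)) (h : Satisfies (Nilp.{w} n c) s t f) : c s id ↔ c t f := by
  let x : ℕ → Fin n := fun i => if hi : i < n then ⟨i, hi⟩ else ⟨0, by omega⟩
  have h1 := h (fun i => tm .leaf (fun _ => x i))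
  rw [eval_eq_val hn _ x s hs (fun i hi => ⟨_, rfl, rfl⟩),
    eval_eq_val hn _ (fun i => x (permNat f i)) t ht (fun i hi => ⟨_, rfl, rfl⟩)] at h1
  have h2 := eq_iff_iff.1 (Nilp.val.inj h1)
  have e1 : (fun i : Fin n => x i) = id := by funext i; simp [x]
  have e2 : (fun i : Fin n => x (permNat f i)) = f := by funext i; simp [x, permNat]
  rwa [e1, e2] at h2

end Nilp

/-! ### The implication relation -/

/-- A nontrivial consequence `⟨s', t', g⟩` of `⟨s, t, f⟩` is one of the expected ones. -/
theorem eq_of_implies.{w} {n : ℕ} (hn : 2 ≤ n) (I J : LinTriple n) (h : Implies.{w} I J)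
    (hJ : ¬ (J.1.1 = J.1.2.1 ∧ J.1.2.2 = 1)) :
    (I.1.1 = I.1.2.1 ∧ J.1.1 = I.1.1 ∧ J.1.2.1 = I.1.1 ∧
      J.1.2.2 ∈ Subgroup.zpowers I.1.2.2) ∨
    (I.1.1 ≠ I.1.2.1 ∧ ((J.1.1 = I.1.1 ∧ J.1.2.1 = I.1.2.1 ∧ J.1.2.2 = I.1.2.2) ∨
      (J.1.1 = I.1.2.1 ∧ J.1.2.1 = I.1.1 ∧ J.1.2.2 = I.1.2.2⁻¹))) := by
  obtain ⟨⟨s, t, f⟩, hs, ht⟩ := I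
  obtain ⟨⟨s', t', g⟩, hs', ht'⟩ := J
  simp only at *
  by_cases hst : s = t
  · left
    subst hst
    -- `c` describes the terms identified with `s'(id)`.
    let c : Brack → (Fin n → Fin n) → Prop := fun u x => u = s' ∧
      (s' = s → ∃ k ∈ Subgroup.zpowers f, x = k) ∧ (s' ≠ s → x = id)
    have hc : Satisfies (Nilp.{w} n c) s s f := by
      apply Nilp.satisfies hn hs hs
      intro x
      simp only [c]
      refine and_congr_right fun e => and_congr (imp_congr_right fun _ => ?_)
        (by simp [e])
      constructor
      · rintro ⟨k, hk, rfl⟩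
        exact ⟨k * f, mul_mem hk (Subgroup.mem_zpowers f), rfl⟩
      · rintro ⟨k, hk, e⟩
        refine ⟨k * f⁻¹, mul_mem hk (inv_mem (Subgroup.mem_zpowers f)), ?_⟩
        funext i
        simpa using congrFun e (f⁻¹ i)
    obtain ⟨h1, h2, h3⟩ := (Nilp.of_satisfies hn hs' ht' g (h _ hc)).1
      ⟨rfl, fun _ => ⟨1, one_mem _, rfl⟩, fun _ => rfl⟩
    by_cases e : s' = s
    · obtain ⟨k, hk, e2⟩ := h2 e
      obtain rfl : g = k := DFunLike.coe_injective e2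
      exact ⟨rfl, e, h1.trans e, hk⟩
    · exact (hJ ⟨h1.symm, DFunLike.coe_injective (h3 e)⟩).elim
  · right
    refine ⟨hst, ?_⟩
    -- The terms identified with `s'(id)`: itself and at most one other.
    let c : Brack → (Fin n → Fin n) → Prop := fun u x => (u = s' ∧ x = id) ∨
      (s' = s ∧ u = t ∧ x = f) ∨ (s' = t ∧ u = s ∧ x ∘ f = id)
    have hc : Satisfies (Nilp.{w} n c) s t f := by
      apply Nilp.satisfies hn hs ht
      intro x
      have e : x ∘ f = f ↔ x = id := by
        constructor
        · intro e
          funext i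
          simpa using congrFun e (f⁻¹ i)
        · rintro rfl; rfl
      have hts : ¬ t = s := fun e => hst e.symm
      simp only [c, e, hst, hts, eq_comm (a := s'), false_and, and_false, true_and, false_or,
        or_false]
      tauto
    rcases (Nilp.of_satisfies hn hs' ht' g (h _ hc)).1 (Or.inl ⟨rfl, rfl⟩) with
      ⟨h1, h2⟩ | ⟨h1, h2, h3⟩ | ⟨h1, h2, h3⟩
    · exact (hJ ⟨h1.symm, DFunLike.coe_injective h2⟩).elim
    · exact Or.inl ⟨h1, h2, DFunLike.coe_injective h3⟩
    · refine Or.inr ⟨h1, h2, ?_⟩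
      apply eq_inv_of_mul_eq_one_left
      exact DFunLike.coe_injective h3

/-- Nontrivial cyclic subgroups of `Sₙ`. -/
abbrev CycSub (n : ℕ) := {H : Subgroup (Equiv.Perm (Fin n)) // IsCyclic H ∧ H ≠ ⊥}

/-- Labels for the equivalence classes: `none` is the class of the trivial identities; `inl` is an
increasing pair of bracketings (in an enumeration by `Fin C`) with a permutation; `inr` is a
bracketing with a nontrivial cyclic subgroup. -/
abbrev ClassLabel (n C : ℕ) :=
  Option (({p : Fin C × Fin C // p.1 < p.2} × Equiv.Perm (Fin n)) ⊕ (Fin C × CycSub n))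

open Classical in
/-- The label of the equivalence class of an identity; an identity `⟨s, t, f⟩` with `s > t` is first
turned around to `⟨t, s, f⁻¹⟩`. -/
noncomputable def classOf {n C : ℕ} (e : BrackN n ≃ Fin C) (I : LinTriple n) : ClassLabel n C :=
  let s := e ⟨I.1.1, I.2.1⟩
  let t := e ⟨I.1.2.1, I.2.2⟩
  if hst : s = t then
    if h : I.1.2.2 = 1 then none
    else some (.inr (s, ⟨Subgroup.zpowers I.1.2.2, inferInstance, by simpa using h⟩))
  else if h : s < t then some (.inl (⟨(s, t), h⟩, I.1.2.2))
  else some (.inl (⟨(t, s), lt_of_le_of_ne (not_lt.1 h) (Ne.symm hst)⟩, I.1.2.2⁻¹))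

theorem implies_of_classOf_eq.{w} {n C : ℕ} (e : BrackN n ≃ Fin C) (I J : LinTriple n)
    (h : classOf e I = classOf e J) : Implies.{w} I J := by
  obtain ⟨⟨s, t, f⟩, hs, ht⟩ := I
  obtain ⟨⟨s', t', g⟩, hs', ht'⟩ := J
  intro G _ hI
  simp only [classOf, EmbeddingLike.apply_eq_iff_eq, Subtype.mk.injEq] at h
  simp only at hI ⊢
  have inj (u v : BrackN n) (h : e u = e v) : u.1 = v.1 := congrArg _ (e.injective h)
  split_ifs at h with h1 h2 h3 <;>
    simp only [Option.some.injEq, Sum.inl.injEq, Sum.inr.injEq, Prod.mk.injEq, Subtype.mk.injEq,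
      EmbeddingLike.apply_eq_iff_eq, inv_inj, reduceCtorEq] at h
  · rename_i h4
    obtain rfl : s' = t' := inj _ _ h3
    subst h4
    exact Satisfies.refl _
  · rename_i h4 _
    obtain rfl : s = t := inj _ _ h1
    obtain rfl : s' = t' := inj _ _ h4
    obtain ⟨rfl, h2⟩ := h
    exact hI.zpowers (h2 ▸ Subgroup.mem_zpowers g)
  · obtain ⟨⟨h1, h2⟩, h3⟩ := h
    subst_vars
    exact hI
  · obtain ⟨⟨h1, h2⟩, h3⟩ := h
    subst_vars
    simpa using hI.symm
  · obtain ⟨⟨h1, h2⟩, h3⟩ := h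
    subst_vars
    exact hI.symm
  · obtain ⟨⟨h1, h2⟩, h3⟩ := h
    subst_vars
    exact hI

theorem classOf_trivial {n C : ℕ} (e : BrackN n ≃ Fin C) (I : LinTriple n)
    (h : I.1.1 = I.1.2.1 ∧ I.1.2.2 = 1) : classOf e I = none := by
  simp [classOf, h]

theorem classOf_eq_of_implies.{w} {n C : ℕ} (hn : 2 ≤ n) (e : BrackN n ≃ Fin C) (I J : LinTriple n)
    (h : Implies.{w} I J) (h' : Implies.{w} J I) : classOf e I = classOf e J := by
  by_cases hI : I.1.1 = I.1.2.1 ∧ I.1.2.2 = 1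
  · by_cases hJ : J.1.1 = J.1.2.1 ∧ J.1.2.2 = 1
    · rw [classOf_trivial e I hI, classOf_trivial e J hJ]
    · rcases eq_of_implies hn I J h hJ with ⟨h1, h2, h3, h4⟩ | ⟨h1, _⟩
      · rw [hI.2] at h4
        exact (hJ ⟨h2.trans h3.symm, by simpa using h4⟩).elim
      · exact (h1 hI.1).elim
  · by_cases hJ : J.1.1 = J.1.2.1 ∧ J.1.2.2 = 1
    · rcases eq_of_implies hn J I h' hI with ⟨h1, h2, h3, h4⟩ | ⟨h1, _⟩
      · rw [hJ.2] at h4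
        exact (hI ⟨h2.trans h3.symm, by simpa using h4⟩).elim
      · exact (h1 hJ.1).elim
    · have k := eq_of_implies hn I J h hJ
      have k' := eq_of_implies hn J I h' hI
      obtain ⟨⟨s, t, f⟩, hs, ht⟩ := I
      obtain ⟨⟨s', t', g⟩, hs', ht'⟩ := J
      simp only at *
      rcases k with ⟨rfl, rfl, rfl, k⟩ | ⟨k1, ⟨rfl, rfl, rfl⟩ | ⟨rfl, rfl, rfl⟩⟩
      · simp only [true_and, ne_eq, not_true_eq_false, false_and, or_false] at k' hI hJ
        have : Subgroup.zpowers f = Subgroup.zpowers g :=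
          le_antisymm (Subgroup.zpowers_le.2 k') (Subgroup.zpowers_le.2 k)
        simp [classOf, hI, hJ, this]
      · rfl
      · have k2 : e ⟨t', hs⟩ ≠ e ⟨s', ht⟩ := by simpa using k1
        simp only [classOf, dif_neg k2, dif_neg k2.symm, inv_inv]
        rcases lt_or_gt_of_ne k2 with hlt | hlt
        · rw [dif_pos hlt, dif_neg hlt.not_gt]
        · rw [dif_pos hlt, dif_neg hlt.not_gt]

theorem nonempty_brackN (n : ℕ) (hn : 1 ≤ n) : Nonempty (BrackN n) := by
  induction n, hn using Nat.le_induction with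
  | base => exact ⟨⟨.leaf, rfl⟩⟩
  | succ n _ ih =>
    obtain ⟨b⟩ := ih
    exact ⟨⟨.node b.1 .leaf, by simp [Brack.leaves, b.2]⟩⟩

theorem classOf_surjective {n C : ℕ} (hn : 1 ≤ n) (e : BrackN n ≃ Fin C) :
    Function.Surjective (classOf e) := by
  rintro (_ | ⟨⟨⟨⟨s, t⟩, hst⟩, f⟩⟩ | ⟨s, H, hc, hH⟩)
  · obtain ⟨b⟩ := nonempty_brackN n hn
    exact ⟨⟨⟨b.1, b.1, 1⟩, b.2, b.2⟩, classOf_trivial e _ ⟨rfl, rfl⟩⟩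
  · refine ⟨⟨⟨(e.symm s).1, (e.symm t).1, f⟩, (e.symm s).2, (e.symm t).2⟩, ?_⟩
    have hst' : s < t := hst
    simp [classOf, hst', hst'.ne]
  · obtain ⟨f, rfl⟩ := (Subgroup.isCyclic_iff_exists_zpowers_eq_top H).1 hc
    refine ⟨⟨⟨(e.symm s).1, (e.symm s).1, f⟩, (e.symm s).2, (e.symm s).2⟩, ?_⟩
    have hf : f ≠ 1 := by simpa using hH
    simp [classOf, hf]

/-! ### Counting -/

theorem card_lt_pairs (C : ℕ) :
    Nat.card {p : Fin C × Fin C // p.1 < p.2} = C.choose 2 := by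
  let E : {p : Fin C × Fin C // p.1 < p.2} ≃ Σ j : Fin C, Fin j :=
    { toFun p := ⟨p.1.2, ⟨p.1.1, p.2⟩⟩
      invFun q := ⟨(⟨q.2, q.2.2.trans q.1.2⟩, q.1), q.2.2⟩
      left_inv _ := rfl
      right_inv _ := rfl }
  rw [Nat.card_congr E, Nat.card_sigma]
  simp only [Nat.card_fin]
  rw [Fin.sum_univ_eq_sum_range (fun i => i), Finset.sum_range_id, Nat.choose_two_right]

/-- Each cyclic subgroup of order `m` has `φ(m)` generators. -/
theorem card_orderOf_div {G : Type*} [Group G] [Finite G] (m : ℕ) (hm : 2 ≤ m) :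
    Nat.card {f : G // orderOf f = m} / m.totient =
      Nat.card {H : Subgroup G // IsCyclic H ∧ Nat.card H = m} := by
  classical
  have := Fintype.ofFinite G
  have := Fintype.ofFinite {H : Subgroup G // IsCyclic H ∧ Nat.card H = m}
  let E : {f : G // orderOf f = m} ≃
      Σ H : {H : Subgroup G // IsCyclic H ∧ Nat.card H = m}, {f : H.1 // orderOf f = m} :=
    { toFun f := ⟨⟨Subgroup.zpowers f.1, inferInstance, by rw [Nat.card_zpowers, f.2]⟩,
        ⟨⟨f.1, Subgroup.mem_zpowers _⟩, by rw [Subgroup.orderOf_mk, f.2]⟩⟩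
      invFun p := ⟨p.2.1.1, by rw [Subgroup.orderOf_coe, p.2.2]⟩
      left_inv _ := rfl
      right_inv := by
        rintro ⟨⟨H, hc, hH⟩, ⟨f, hfH⟩, hf⟩
        have : Subgroup.zpowers f = H := by
          apply Subgroup.eq_of_le_of_card_ge (Subgroup.zpowers_le.2 hfH)
          rw [Nat.card_zpowers, hH, ← hf, Subgroup.orderOf_mk]
        subst this
        rfl }
  have hfib (H : {H : Subgroup G // IsCyclic H ∧ Nat.card H = m}) :
      Nat.card {f : H.1 // orderOf f = m} = m.totient := by
    have := H.2.1
    rw [← IsCyclic.card_orderOf_eq_totient (α := H.1) (d := m)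
      (by rw [← Nat.card_eq_fintype_card, H.2.2]), Nat.card_eq_fintype_card, Fintype.card_subtype]
  rw [Nat.card_congr E, Nat.card_sigma, Finset.sum_congr rfl fun H _ => hfib H]
  simp only [Finset.sum_const, Finset.card_univ, smul_eq_mul]
  rw [Nat.mul_div_cancel _ (Nat.totient_pos.2 (by omega)), Nat.card_eq_fintype_card]

theorem sum_card_orderOf (n : ℕ) :
    ∑ m ∈ Finset.Icc 2 n.factorial,
        Nat.card {f : Equiv.Perm (Fin n) // orderOf f = m} / m.totient =
      Nat.card (CycSub n) := by
  classical
  have := Fintype.ofFinite (Subgroup (Equiv.Perm (Fin n)))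
  rw [Finset.sum_congr rfl fun m hm =>
    card_orderOf_div (G := Equiv.Perm (Fin n)) m (Finset.mem_Icc.1 hm).1]
  have hcard (P : Subgroup (Equiv.Perm (Fin n)) → Prop) :
      Nat.card {H // P H} = (Finset.univ.filter P).card := by
    rw [Nat.card_eq_fintype_card, Fintype.card_subtype]
  simp only [CycSub, hcard]
  rw [Finset.card_eq_sum_card_fiberwise (f := fun H : Subgroup (Equiv.Perm (Fin n)) => Nat.card H)
    (t := Finset.Icc 2 n.factorial)]
  · refine Finset.sum_congr rfl fun m hm => congrArg Finset.card ?_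
    ext H
    simp only [Finset.mem_filter, Finset.mem_univ, true_and, and_assoc, and_congr_right_iff]
    intro _
    constructor
    · rintro rfl
      refine ⟨?_, rfl⟩
      rintro rfl
      simp at hm
    · exact fun h => h.2
  · intro H hH
    simp only [Finset.coe_filter, Finset.mem_univ, true_and, Set.mem_ofPred_eq] at hH
    have h1 := (Subgroup.one_lt_card_iff_ne_bot H).2 hH.2
    have h2 := Nat.le_of_dvd (Nat.card_pos) (Subgroup.card_subgroup_dvd_card H)
    rw [Nat.card_perm, Nat.card_fin] at h2
    exact Finset.mem_coe.2 (Finset.mem_Icc.2 ⟨h1, h2⟩)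

/-- Proposition 4.3: the number of varieties of groupoids defined by a single linear
identity of length `2n` (equivalence classes under mutual implication) is
`1 + C(Cₙ,2)·n! + Cₙ·Σ_{m≥2} s_{n,m}/φ(m)`, and the sum `Σ_{m≥2} s_{n,m}/φ(m)` is the
number of nontrivial cyclic subgroups of `Sₙ`. (Orders of elements in `Sₙ` are at most
`n!`, so the sum may be taken over `2 ≤ m ≤ n!`.) -/
theorem stmt5.{w} (n : ℕ) (hn : 2 ≤ n) :
    Nat.card (Quot (fun I J : LinTriple n => Implies.{w} I J ∧ Implies.{w} J I)) =
      1 + (catalan (n - 1)).choose 2 * n.factorial +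
        catalan (n - 1) * ∑ m ∈ Finset.Icc 2 n.factorial,
          Nat.card {f : Equiv.Perm (Fin n) // orderOf f = m} / m.totient ∧
    ∑ m ∈ Finset.Icc 2 n.factorial,
        Nat.card {f : Equiv.Perm (Fin n) // orderOf f = m} / m.totient =
      Nat.card {H : Subgroup (Equiv.Perm (Fin n)) // IsCyclic H ∧ H ≠ ⊥} := by
  refine ⟨?_, sum_card_orderOf n⟩
  rw [sum_card_orderOf n]
  have := finite_brackN n (by omega)
  have e := Finite.equivFin (BrackN n)
  rw [card_brackN n (by omega)] at e
  have hb : Function.Bijective (Quot.lift (r := fun I J : LinTriple n =>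
      Implies.{w} I J ∧ Implies.{w} J I) (classOf e)
      (fun I J h => classOf_eq_of_implies.{w} hn e I J h.1 h.2)) := by
    constructor
    · rintro ⟨I⟩ ⟨J⟩ h
      exact Quot.sound ⟨implies_of_classOf_eq e I J h, implies_of_classOf_eq e J I h.symm⟩
    · intro k
      obtain ⟨I, hI⟩ := classOf_surjective (by omega) e k
      exact ⟨Quot.mk _ I, hI⟩
  rw [Nat.card_congr (Equiv.ofBijective _ hb), Finite.card_option, Nat.card_sum, Nat.card_prod,
    Nat.card_prod, card_lt_pairs, Nat.card_perm, Nat.card_fin, Nat.card_fin]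
  ring
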